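/- Let Σ_A(ℕ) be a topologically mixing, finitely primitive (BIP) countable Markov shift, f : Σ_A(ℕ) → ℝ satisfying the Walters condition with Var_1 f < ∞ and P(f) < ∞, and for β > 0 let h_β be the Ruelle eigenfunction of L_{βf}. Then for every k ≥ 1, Var_k((1/β) log h_β) is bounded above by a constant M_k not depending on β, and lim_{k→∞} M_k = 0. -/

import Mathlib

open Filter Topology MeasureTheory
open scoped ENNReal

/-- The countable Markov shift over alphabet ℕ determined by the 0-1 matrix `A`. -/
def MarkovShift (A : ℕ → ℕ → Bool) : Type :=
  {x : ℕ → ℕ // ∀ i, A (x i) (x (i + 1)) = true}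

namespace MarkovShift

variable {A : ℕ → ℕ → Bool}

instance : TopologicalSpace (MarkovShift A) :=
  instTopologicalSpaceSubtype

instance : MeasurableSpace (MarkovShift A) := borel _

instance : BorelSpace (MarkovShift A) := ⟨rfl⟩

/-- The shift map. -/
def shift (x : MarkovShift A) : MarkovShift A :=
  ⟨fun n => x.1 (n + 1), fun i => x.2 (i + 1)⟩

/-- The cylinder set determined by a finite word. -/
def cylinder (w : List ℕ) : Set (MarkovShift A) :=
  {x | ∀ i : Fin w.length, x.1 i = w.get i}

/-- The cylinder set determined by the first `m` coordinates of `x`. -/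
def cylOf (x : MarkovShift A) (m : ℕ) : Set (MarkovShift A) :=
  {y | ∀ i < m, y.1 i = x.1 i}

/-- A symbol is admissible when its cylinder is nonempty. -/
def Admissible (A : ℕ → ℕ → Bool) (a : ℕ) : Prop :=
  ∃ x : MarkovShift A, x.1 0 = a

/-- Topologically mixing. -/
def TopologicallyMixing (A : ℕ → ℕ → Bool) : Prop :=
  ∀ a b : ℕ, Admissible A a → Admissible A b →
    ∃ N : ℕ, ∀ n ≥ N, ∃ x : MarkovShift A, x.1 0 = a ∧ (shift^[n] x).1 0 = b

/-- Finitely primitive (BIP). -/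
def FinitelyPrimitive (A : ℕ → ℕ → Bool) : Prop :=
  ∃ (K₀ : ℕ) (F : Finset ℕ), ∀ a b : ℕ, Admissible A a → Admissible A b →
    ∃ w : List ℕ, w.length = K₀ ∧ (∀ c ∈ w, c ∈ F) ∧
      List.Chain' (fun u v => A u v = true) (a :: (w ++ [b]))

/-- First coordinate where two distinct points disagree. -/
noncomputable def firstDiff (x y : MarkovShift A) (h : x ≠ y) : ℕ :=
  Nat.find (Function.ne_iff.mp (fun hxy : x.1 = y.1 => h (Subtype.ext hxy)))

open Classical in
/-- The metric `d(x,y) = r^{t(x,y)}`. -/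
noncomputable def dist' (r : ℝ) (x y : MarkovShift A) : ℝ :=
  if h : x = y then 0 else r ^ firstDiff x y h

/-- Birkhoff sum `S_n f`. -/
def birkhoff (f : MarkovShift A → ℝ) (n : ℕ) (x : MarkovShift A) : ℝ :=
  ∑ j ∈ Finset.range n, f (shift^[j] x)

/-- The set of values `|S_n f x - S_n f y|` over pairs agreeing on the first `m` coordinates. -/
def varSet (f : MarkovShift A → ℝ) (n m : ℕ) : Set ℝ :=
  {c | ∃ x y : MarkovShift A, (∀ i < m, x.1 i = y.1 i) ∧ c = |birkhoff f n x - birkhoff f n y|}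

/-- `Var_m (S_n f)`. -/
noncomputable def varBirk (f : MarkovShift A → ℝ) (n m : ℕ) : ℝ := sSup (varSet f n m)

/-- `Var_1 f < ∞`. -/
def Var1Finite (f : MarkovShift A → ℝ) : Prop := BddAbove (varSet f 1 1)

/-- The set whose supremum is `sup_{n ≥ 1} Var_{n+k}(S_n f)`. -/
def waltersSet (f : MarkovShift A → ℝ) (k : ℕ) : Set ℝ :=
  {c | ∃ n, 1 ≤ n ∧ c ∈ varSet f n (n + k)}

/-- `M_k = sup_{n ≥ 1} Var_{n+k}(S_n f)`. -/
noncomputable def waltersSup (f : MarkovShift A → ℝ) (k : ℕ) : ℝ := sSup (waltersSet f k)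

/-- The Walters condition. -/
def SatisfiesWalters (f : MarkovShift A → ℝ) : Prop :=
  (∀ k, 1 ≤ k → BddAbove (waltersSet f k)) ∧
    Tendsto (fun k => waltersSup f k) atTop (𝓝 0)

/-- The partition function `Z_n(f,a) = Σ_{σ^n x = x, x₀ = a} e^{S_n f (x)}`. -/
noncomputable def partitionSum (f : MarkovShift A → ℝ) (n : ℕ) (a : ℕ) : ℝ :=
  ∑' x : {x : MarkovShift A // shift^[n] x = x ∧ x.1 0 = a}, Real.exp (birkhoff f n x.1)

/-- `f` has (finite) Gurevich pressure `p`. -/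
def HasGurevichPressure (f : MarkovShift A → ℝ) (p : ℝ) : Prop :=
  ∀ a : ℕ, Admissible A a →
    (∀ n, 1 ≤ n → Summable fun x : {x : MarkovShift A // shift^[n] x = x ∧ x.1 0 = a} =>
        Real.exp (birkhoff f n x.1)) ∧
    Tendsto (fun n : ℕ => (1 / (n : ℝ)) * Real.log (partitionSum f n a)) atTop (𝓝 p)

/-- σ-invariant Borel probability measure. -/
def IsInvariantProb (μ : Measure (MarkovShift A)) : Prop :=
  IsProbabilityMeasure μ ∧ μ.map shift = μ

/-- `m(f)`, the maximal ergodic average. -/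
noncomputable def mf (f : MarkovShift A → ℝ) : ℝ :=
  sSup {c | ∃ μ : Measure (MarkovShift A),
    IsInvariantProb μ ∧ Integrable f μ ∧ ∫ x, f x ∂μ = c}

/-- A maximizing measure for `f`. -/
def IsMaximizing (f : MarkovShift A → ℝ) (μ : Measure (MarkovShift A)) : Prop :=
  IsInvariantProb μ ∧ Integrable f μ ∧ ∫ x, f x ∂μ = mf f

/-- Bounded real valued function. -/
def BoundedFun (g : MarkovShift A → ℝ) : Prop := ∃ C, ∀ x, |g x| ≤ C

/-- A bounded calibrated sub-action for `f`. -/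
def IsCalibratedSubaction (f V : MarkovShift A → ℝ) : Prop :=
  Continuous V ∧ BoundedFun V ∧
    (∀ x, f x + V x - V (shift x) - mf f ≤ 0) ∧
    (∀ y, ∃ x, shift x = y ∧ f x + V x - V (shift x) - mf f = 0)

/-- The Ruelle transfer operator `(L_g u)(x) = Σ_{σ y = x} e^{g(y)} u(y)`. -/
noncomputable def ruelle (g u : MarkovShift A → ℝ) (x : MarkovShift A) : ℝ :=
  ∑' y : {y : MarkovShift A // shift y = x}, Real.exp (g y.1) * u y.1

/-- Ruelle-Perron-Frobenius data for the potential `f` with pressure `p`: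
eigenfunction `h`, eigenmeasure `ν`. -/
def IsRPF (f : MarkovShift A → ℝ) (p : ℝ) (h : MarkovShift A → ℝ)
    (ν : Measure (MarkovShift A)) : Prop :=
  Continuous h ∧ (∀ x, 0 < h x) ∧
    (∀ x, ruelle f h x = Real.exp p * h x) ∧
    IsProbabilityMeasure ν ∧
    (∀ g : MarkovShift A → ℝ, Continuous g → BoundedFun g →
      ∫ x, ruelle f g x ∂ν = Real.exp p * ∫ x, g x ∂ν) ∧
    ∫ x, h x ∂ν = 1

/-- The Gibbs measure `dμ = h dν`. -/
noncomputable def gibbs (h : MarkovShift A → ℝ) (ν : Measure (MarkovShift A)) :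
    Measure (MarkovShift A) :=
  ν.withDensity fun x => ENNReal.ofReal (h x)

/-- The Mañé potential `S_f(x,y)` (with respect to the metric of parameter `r`). -/
noncomputable def manePot (r : ℝ) (f : MarkovShift A → ℝ) (x y : MarkovShift A) : EReal :=
  ⨅ ε : {ε : ℝ // 0 < ε}, ⨆ n : {n : ℕ // 1 ≤ n},
    ⨆ _z : {z : MarkovShift A // dist' r x z < ε.1 ∧ shift^[n.1] z = y},
      ((birkhoff (fun w => f w - mf f) n.1 _z.1 : ℝ) : EReal)

/-- The (topological) support of a measure. -/
def msupport (μ : Measure (MarkovShift A)) : Set (MarkovShift A) :=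
  {x | ∀ U : Set (MarkovShift A), IsOpen U → x ∈ U → 0 < μ U}

end MarkovShift

namespace MarkovShift

section aux

variable {A : ℕ → ℕ → Bool}

theorem pms : TopologicalSpace.PseudoMetrizableSpace (MarkovShift A) :=
  (Topology.IsInducing.subtypeVal
    (t := {x : ℕ → ℕ | ∀ i, A (x i) (x (i + 1)) = true})).pseudoMetrizableSpace

/-- Prepend the symbol `a` (if allowed, otherwise do nothing). -/
def consT (a : ℕ) (x : MarkovShift A) : MarkovShift A :=
  if h : A a (x.1 0) = true then
    ⟨fun i => Nat.casesOn i a (fun j => x.1 j), fun i => by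
      cases i with
      | zero => exact h
      | succ j => exact x.2 j⟩
  else x

theorem consT_zero {a : ℕ} {x : MarkovShift A} (h : A a (x.1 0) = true) :
    (consT a x).1 0 = a := by
  simp [consT, h]

theorem consT_succ {a : ℕ} {x : MarkovShift A} (h : A a (x.1 0) = true) (i : ℕ) :
    (consT a x).1 (i + 1) = x.1 i := by
  simp [consT, h]

theorem shift_consT {a : ℕ} {x : MarkovShift A} (h : A a (x.1 0) = true) :
    shift (consT a x) = x :=
  Subtype.ext (funext fun i => consT_succ h i)

theorem adm_shift (y : MarkovShift A) : A (y.1 0) ((shift y).1 0) = true := y.2 0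

theorem consT_shift (y : MarkovShift A) : consT (y.1 0) (shift y) = y := by
  apply Subtype.ext
  funext i
  cases i with
  | zero => exact consT_zero (adm_shift y)
  | succ j => exact consT_succ (adm_shift y) j

theorem continuous_coord (i : ℕ) : Continuous (fun x : MarkovShift A => x.1 i) :=
  (continuous_apply i).comp continuous_subtype_val

theorem continuous_consT (a : ℕ) : Continuous (consT a : MarkovShift A → MarkovShift A) := by
  refine Continuous.subtype_mk (p := fun x : ℕ → ℕ => ∀ i, A (x i) (x (i + 1)) = true)
    (f := fun x => (consT a x).1) ?_ (fun x => (consT a x).2)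
  refine continuous_pi fun i => ?_
  have : (fun x : MarkovShift A => (consT a x).1 i) =
      (fun q : ℕ × ℕ × ℕ => if A a q.1 = true then (if i = 0 then a else q.2.1) else q.2.2) ∘
        (fun x : MarkovShift A => (x.1 0, x.1 (i - 1), x.1 i)) := by
    funext x
    by_cases h : A a (x.1 0) = true
    · cases i with
      | zero => simp [consT_zero h, h]
      | succ j => simp [consT_succ h, h]
    · simp [consT, h]
  rw [this]
  exact continuous_of_discreteTopology.comp
    ((continuous_coord 0).prodMk ((continuous_coord _).prodMk (continuous_coord _)))

theorem isOpen_cylOf (x : MarkovShift A) (m : ℕ) : IsOpen (cylOf x m) := by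
  have : cylOf x m = ⋂ i ∈ Finset.range m, (fun y : MarkovShift A => y.1 i) ⁻¹' {x.1 i} := by
    ext y; simp [cylOf]
  rw [this]
  exact isOpen_biInter_finset fun i _ => (isOpen_discrete _).preimage (continuous_coord i)

theorem exists_cylOf_subset {U : Set (MarkovShift A)} (hU : IsOpen U) {x : MarkovShift A}
    (hx : x ∈ U) : ∃ m, cylOf x m ⊆ U := by
  obtain ⟨V, hV, rfl⟩ := isOpen_induced_iff.mp hU
  obtain ⟨I, u, hu, hsub⟩ := isOpen_pi_iff.mp hV x.1 hx
  refine ⟨I.sup id + 1, fun y hy => hsub ?_⟩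
  intro i hi
  rw [hy i (Nat.lt_succ_of_le (Finset.le_sup (f := id) hi))]
  exact (hu i hi).2

theorem measurableSet_adm (a : ℕ) : MeasurableSet {x : MarkovShift A | A a (x.1 0) = true} :=
  (continuous_coord 0).measurable (show MeasurableSet {b : ℕ | A a b = true} from trivial)

/-- Unweighted transfer operator. -/
noncomputable def T (u : MarkovShift A → ℝ≥0∞) (x : MarkovShift A) : ℝ≥0∞ :=
  ∑' a : ℕ, if A a (x.1 0) = true then u (consT a x) else 0

/-- Weighted transfer operator. -/
noncomputable def Lp (φ : MarkovShift A → ℝ) (u : MarkovShift A → ℝ≥0∞) :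
    MarkovShift A → ℝ≥0∞ :=
  T (fun y => ENNReal.ofReal (Real.exp (φ y)) * u y)

theorem T_eq (u : MarkovShift A → ℝ≥0∞) (x : MarkovShift A) :
    T u x = ∑' y : {y : MarkovShift A // shift y = x}, u y.1 := by
  let e : {a : ℕ // A a (x.1 0) = true} ≃ {y : MarkovShift A // shift y = x} :=
    { toFun := fun a => ⟨consT a.1 x, shift_consT a.2⟩
      invFun := fun y => ⟨y.1.1 0, by have := adm_shift y.1; rwa [y.2] at this⟩
      left_inv := fun a => Subtype.ext (consT_zero a.2)
      right_inv := fun y => by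
        apply Subtype.ext
        have := consT_shift y.1
        rw [y.2] at this
        exact this }
  rw [← e.tsum_eq]
  have := tsum_subtype {a : ℕ | A a (x.1 0) = true} (fun a => u (consT a x))
  refine Eq.trans ?_ this.symm
  refine tsum_congr fun a => ?_
  simp [Set.indicator_apply]

theorem le_T (u : MarkovShift A → ℝ≥0∞) (y : MarkovShift A) : u y ≤ T u (shift y) := by
  rw [T_eq]
  exact ENNReal.le_tsum (f := fun z : {z : MarkovShift A // shift z = shift y} => u z.1) ⟨y, rfl⟩

theorem measurable_T {u : MarkovShift A → ℝ≥0∞} (hu : Measurable u) : Measurable (T u) := by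
  refine Measurable.ennreal_tsum fun a => ?_
  exact Measurable.ite (measurableSet_adm a) (hu.comp (continuous_consT a).measurable)
    measurable_const

theorem measurable_Lp {φ : MarkovShift A → ℝ} (hφ : Continuous φ) {u : MarkovShift A → ℝ≥0∞}
    (hu : Measurable u) : Measurable (Lp φ u) :=
  measurable_T ((ENNReal.measurable_ofReal.comp
    (Real.measurable_exp.comp hφ.measurable)).mul hu)

theorem measurable_Lp_iter {φ : MarkovShift A → ℝ} (hφ : Continuous φ) (n : ℕ) :
    ∀ {u : MarkovShift A → ℝ≥0∞}, Measurable u → Measurable ((Lp φ)^[n] u) := by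
  induction n with
  | zero => intro u hu; exact hu
  | succ n ih => intro u hu; exact ih (measurable_Lp hφ hu)

theorem T_mono {u v : MarkovShift A → ℝ≥0∞} (h : ∀ x, u x ≤ v x) (x : MarkovShift A) :
    T u x ≤ T v x := by
  refine ENNReal.tsum_le_tsum fun a => ?_
  split_ifs
  · exact h _
  · exact le_rfl

theorem Lp_iter_mono (φ : MarkovShift A → ℝ) (n : ℕ) :
    ∀ {u v : MarkovShift A → ℝ≥0∞}, (∀ x, u x ≤ v x) →
      ∀ x, (Lp φ)^[n] u x ≤ (Lp φ)^[n] v x := by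
  induction n with
  | zero => intro u v h; exact h
  | succ n ih => intro u v h; exact ih (T_mono fun x => mul_le_mul_right (h x) _)

theorem Lp_const_mul (φ : MarkovShift A → ℝ) (c : ℝ≥0∞) (u : MarkovShift A → ℝ≥0∞) :
    Lp φ (fun x => c * u x) = fun x => c * Lp φ u x := by
  funext x
  simp only [Lp, T, ← ENNReal.tsum_mul_left]
  refine tsum_congr fun a => ?_
  split_ifs <;> ring

theorem Lp_iter_const_mul (φ : MarkovShift A → ℝ) (c : ℝ≥0∞) (n : ℕ) :
    ∀ (u : MarkovShift A → ℝ≥0∞),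
      (Lp φ)^[n] (fun x => c * u x) = fun x => c * (Lp φ)^[n] u x := by
  induction n with
  | zero => intro u; rfl
  | succ n ih =>
    intro u
    rw [Function.iterate_succ_apply, Lp_const_mul, ih]
    rfl

theorem Lp_iter_eigen (φ : MarkovShift A → ℝ) (c : ℝ≥0∞) (H : MarkovShift A → ℝ≥0∞)
    (hH : Lp φ H = fun x => c * H x) (n : ℕ) :
    (Lp φ)^[n] H = fun x => c ^ n * H x := by
  induction n with
  | zero => funext x; simp
  | succ n ih =>
    rw [Function.iterate_succ_apply, hH, Lp_iter_const_mul, ih]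
    funext x
    ring

theorem birkhoff_succ (φ : MarkovShift A → ℝ) (n : ℕ) (x : MarkovShift A) :
    birkhoff φ (n + 1) x = φ x + birkhoff φ n (shift x) := by
  simp [birkhoff, Finset.sum_range_succ', add_comm]

theorem mul_T (c u : MarkovShift A → ℝ≥0∞) (x : MarkovShift A) :
    c x * T u x = T (fun y => c (shift y) * u y) x := by
  simp only [T, ← ENNReal.tsum_mul_left]
  refine tsum_congr fun a => ?_
  split_ifs with h
  · rw [shift_consT h]
  · simp

theorem Lp_iter_eq (φ : MarkovShift A → ℝ) (n : ℕ) :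
    ∀ (u : MarkovShift A → ℝ≥0∞),
      (Lp φ)^[n] u = T^[n] (fun y => ENNReal.ofReal (Real.exp (birkhoff φ n y)) * u y) := by
  induction n with
  | zero => intro u; funext x; simp [birkhoff]
  | succ n ih =>
    intro u
    rw [Function.iterate_succ_apply, ih, Function.iterate_succ_apply]
    congr 1
    funext x
    rw [Lp, mul_T (fun x => ENNReal.ofReal (Real.exp (birkhoff φ n x)))]
    congr 1
    funext y
    rw [birkhoff_succ, add_comm, Real.exp_add, ENNReal.ofReal_mul (Real.exp_nonneg _), mul_assoc]

theorem T_iter_compare {k : ℕ} (hk : 1 ≤ k) {x y : MarkovShift A} (n : ℕ) :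
    ∀ (U V : MarkovShift A → ℝ≥0∞),
    (∀ i < k, x.1 i = y.1 i) →
    (∀ z z' : MarkovShift A, shift^[n] z = x → shift^[n] z' = y →
      (∀ i < n + k, z.1 i = z'.1 i) → U z ≤ V z') →
    T^[n] U x ≤ T^[n] V y := by
  induction n with
  | zero => intro U V hxy h; exact h x y rfl rfl (by simpa using hxy)
  | succ n ih =>
    intro U V hxy h
    refine ih (T U) (T V) hxy ?_
    intro z z' hz hz' hzz
    refine ENNReal.tsum_le_tsum fun a => ?_
    have h0 : z.1 0 = z'.1 0 := hzz 0 (by omega)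
    rw [← h0]
    split_ifs with ha
    · have ha' : A a (z'.1 0) = true := h0 ▸ ha
      apply h
      · rw [Function.iterate_succ_apply, shift_consT ha, hz]
      · rw [Function.iterate_succ_apply, shift_consT ha', hz']
      · intro i hi
        cases i with
        | zero => rw [consT_zero ha, consT_zero ha']
        | succ j => rw [consT_succ ha, consT_succ ha']; exact hzz j (by omega)
    · exact le_rfl

theorem Lp_iter_pos (φ : MarkovShift A → ℝ) (n : ℕ) :
    ∀ (u : MarkovShift A → ℝ≥0∞) (y : MarkovShift A), 0 < u y →
      0 < (Lp φ)^[n] u (shift^[n] y) := by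
  induction n with
  | zero => intro u y h; exact h
  | succ n ih =>
    intro u y h
    refine ih (Lp φ u) (shift y) (lt_of_lt_of_le ?_ (le_T _ y))
    exact ENNReal.mul_pos (by simp [Real.exp_pos]) h.ne'

/-- Gluing of two points. -/
def glue (p x : MarkovShift A) (n : ℕ) (h : p.1 n = x.1 0) : MarkovShift A :=
  ⟨fun i => if i < n then p.1 i else x.1 (i - n), fun i => by
    by_cases h1 : i + 1 < n
    · have : i < n := by omega
      simp only [h1, this, if_true]; exact p.2 i
    · by_cases h2 : i < n
      · have h3 : i + 1 = n := by omega
        simp only [h1, h2, if_true, if_false]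
        have h4 : i + 1 - n = 0 := by omega
        rw [h4, ← h, ← h3]; exact p.2 i
      · simp only [h1, h2, if_false]
        have h4 : i + 1 - n = i - n + 1 := by omega
        rw [h4]; exact x.2 _⟩

theorem shift_iter_coord (n : ℕ) : ∀ (x : MarkovShift A) (i : ℕ),
    (shift^[n] x).1 i = x.1 (i + n) := by
  induction n with
  | zero => intro x i; rfl
  | succ n ih =>
    intro x i
    rw [Function.iterate_succ_apply, ih]
    simp [shift, add_assoc]

theorem shift_glue (p x : MarkovShift A) (n : ℕ) (h : p.1 n = x.1 0) :
    shift^[n] (glue p x n h) = x := by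
  apply Subtype.ext
  funext i
  rw [shift_iter_coord]
  simp [glue]

theorem glue_coord (p x : MarkovShift A) (n : ℕ) (h : p.1 n = x.1 0) (i : ℕ) (hi : i ≤ n) :
    (glue p x n h).1 i = p.1 i := by
  rcases hi.lt_or_eq with h1 | rfl
  · simp [glue, h1]
  · simp [glue, h]

theorem exists_reach (hmix : TopologicallyMixing A) (z x : MarkovShift A) (m : ℕ) :
    ∃ n, ∃ y ∈ cylOf z m, shift^[n] y = x := by
  obtain ⟨N, hN⟩ := hmix (z.1 m) (x.1 0) ⟨shift^[m] z, by rw [shift_iter_coord, zero_add]⟩ ⟨x, rfl⟩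
  obtain ⟨p, hp0, hpN⟩ := hN N le_rfl
  rw [shift_iter_coord, zero_add] at hpN
  have hq : z.1 m = (glue p x N hpN).1 0 := by rw [glue_coord _ _ _ _ _ (Nat.zero_le _), hp0]
  refine ⟨N + m, glue z (glue p x N hpN) m hq, fun i hi => glue_coord _ _ _ _ _ hi.le, ?_⟩
  rw [Function.iterate_add_apply, shift_glue, shift_glue]

theorem ruelle_single (φ : MarkovShift A → ℝ) (a : ℕ) (g : MarkovShift A → ℝ)
    (x : MarkovShift A) :
    ruelle φ (fun y => if y.1 0 = a then g y else 0) x =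
      if A a (x.1 0) = true then Real.exp (φ (consT a x)) * g (consT a x) else 0 := by
  rw [ruelle]
  split_ifs with h
  · rw [tsum_eq_single ⟨consT a x, shift_consT h⟩]
    · simp [consT_zero h]
    · rintro ⟨y, rfl⟩ hy
      have : y.1 0 ≠ a := by
        rintro rfl
        exact hy (Subtype.ext (consT_shift y).symm)
      simp [this]
  · refine (tsum_congr fun y => ?_).trans tsum_zero
    have : y.1.1 0 ≠ a := by
      rintro rfl
      have := adm_shift y.1
      rw [y.2] at this
      exact h this
    simp [this]

/-- Duality of the transfer operator with the eigenmeasure on one branch. -/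
theorem branch_dual {φ : MarkovShift A → ℝ} (hφ : Continuous φ)
    (hb : ∀ a, ∃ C, ∀ x : MarkovShift A, x.1 0 = a → φ x ≤ C)
    {p : ℝ} {ν : Measure (MarkovShift A)} [IsProbabilityMeasure ν]
    (hd : ∀ g : MarkovShift A → ℝ, Continuous g → BoundedFun g →
      ∫ x, ruelle φ g x ∂ν = Real.exp p * ∫ x, g x ∂ν)
    (a : ℕ) (u : MarkovShift A → ℝ≥0∞) (hu : Measurable u) :
    ∫⁻ x, (if A a (x.1 0) = true then
        ENNReal.ofReal (Real.exp (φ (consT a x))) * u (consT a x) else 0) ∂ν =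
      ENNReal.ofReal (Real.exp p) * ∫⁻ x, (if x.1 0 = a then u x else 0) ∂ν := by
  have := pms (A := A)
  obtain ⟨C, hC⟩ := hb a
  have hcm : Measurable (consT a : MarkovShift A → MarkovShift A) := (continuous_consT a).measurable
  have hwm : Measurable fun x : MarkovShift A => ENNReal.ofReal (Real.exp (φ (consT a x))) :=
    ENNReal.measurable_ofReal.comp
      (Real.measurable_exp.comp (hφ.measurable.comp hcm))
  let w : MarkovShift A → ℝ≥0∞ := fun x =>
    if A a (x.1 0) = true then ENNReal.ofReal (Real.exp (φ (consT a x))) else 0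
  have hw : Measurable w := Measurable.ite (measurableSet_adm a) hwm measurable_const
  have hSa : MeasurableSet {x : MarkovShift A | x.1 0 = a} :=
    (continuous_coord 0).measurable (measurableSet_singleton a)
  have hwfin : ∫⁻ x, w x ∂ν ≠ ∞ := by
    refine ne_top_of_le_ne_top (b := ∫⁻ _, ENNReal.ofReal (Real.exp C) ∂ν) ?_
      (lintegral_mono fun x => ?_)
    · simp
    · simp only [w]
      split_ifs with h
      · exact ENNReal.ofReal_le_ofReal (Real.exp_le_exp.mpr (hC _ (consT_zero h)))
      · exact zero_le
  have := isFiniteMeasure_withDensity hwfin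
  have hL : ∀ u : MarkovShift A → ℝ≥0∞, Measurable u →
      ∫⁻ x, u x ∂((ν.withDensity w).map (consT a)) =
      ∫⁻ x, (if A a (x.1 0) = true then
        ENNReal.ofReal (Real.exp (φ (consT a x))) * u (consT a x) else 0) ∂ν := by
    intro u hu
    rw [lintegral_map hu hcm]
    refine (lintegral_withDensity_eq_lintegral_mul ν hw (hu.comp hcm)).trans ?_
    refine lintegral_congr fun x => ?_
    simp only [w, Pi.mul_apply, ite_mul, zero_mul, Function.comp_apply]
  have hRt : ∀ u : MarkovShift A → ℝ≥0∞,
      ∫⁻ x, u x ∂(ENNReal.ofReal (Real.exp p) • ν.restrict {x | x.1 0 = a}) =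
      ENNReal.ofReal (Real.exp p) * ∫⁻ x, (if x.1 0 = a then u x else 0) ∂ν := by
    intro u
    rw [lintegral_smul_measure, ← lintegral_indicator hSa, smul_eq_mul]
    congr 1
    refine lintegral_congr fun x => ?_
    simp only [Set.indicator_apply, Set.mem_setOf_eq]
  rw [← hL u hu, ← hRt u]
  congr 1
  refine ext_of_forall_lintegral_eq_of_IsFiniteMeasure fun g => ?_
  have hgm : Measurable fun x => (g x : ℝ≥0∞) := g.continuous.measurable.coe_nnreal_ennreal
  rw [hL _ hgm, hRt]
  have hgb : ∀ x, (g x : ℝ) ≤ nndist g 0 := fun x => by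
    exact_mod_cast BoundedContinuousFunction.NNReal.upper_bound g x
  have hgc : Continuous fun x => (g x : ℝ) := NNReal.continuous_coe.comp g.continuous
  let G : MarkovShift A → ℝ := fun y => if y.1 0 = a then (g y : ℝ) else 0
  have hGc : Continuous G := by
    refine continuous_iff_continuousAt.mpr fun x => ?_
    have hev : ∀ᶠ y in 𝓝 x, y.1 0 = x.1 0 :=
      ((isOpen_discrete {x.1 0}).preimage (continuous_coord 0)).mem_nhds rfl
    by_cases hx : x.1 0 = a
    · refine hgc.continuousAt.congr ?_
      filter_upwards [hev] with y hy
      simp [G, hy, hx]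
    · refine (continuousAt_const (y := (0 : ℝ))).congr ?_
      filter_upwards [hev] with y hy
      simp [G, hy, hx]
  have hG0 : ∀ x, 0 ≤ G x := fun x => by
    simp only [G]; split_ifs
    · exact (g x).2
    · exact le_rfl
  have hGb : ∀ x, G x ≤ nndist g 0 := fun x => by
    simp only [G]; split_ifs
    · exact hgb x
    · exact NNReal.coe_nonneg _
  have key := hd G hGc ⟨nndist g 0, fun x => by rw [abs_of_nonneg (hG0 x)]; exact hGb x⟩
  have hin1 : Integrable G ν := Integrable.of_bound hGc.measurable.aestronglyMeasurable
    (nndist g 0 : ℝ) (ae_of_all _ fun x => by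
      rw [Real.norm_eq_abs, abs_of_nonneg (hG0 x)]; exact hGb x)
  have hr : (fun x => ruelle φ G x) = fun x => if A a (x.1 0) = true then
      Real.exp (φ (consT a x)) * (g (consT a x) : ℝ) else 0 :=
    funext fun x => ruelle_single φ a (fun y => (g y : ℝ)) x
  have hr0 : ∀ x, 0 ≤ ruelle φ G x := fun x => by
    rw [congrFun hr x]; split_ifs
    · exact mul_nonneg (Real.exp_nonneg _) (g _).2
    · exact le_rfl
  have hrm : Measurable fun x => ruelle φ G x := by
    rw [hr]
    exact Measurable.ite (measurableSet_adm a) ((Real.measurable_exp.comp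
      (hφ.measurable.comp hcm)).mul (hgc.measurable.comp hcm)) measurable_const
  have hin2 : Integrable (fun x => ruelle φ G x) ν :=
    Integrable.of_bound hrm.aestronglyMeasurable (Real.exp C * nndist g 0)
      (ae_of_all _ fun x => by
        rw [Real.norm_eq_abs, abs_of_nonneg (hr0 x), congrFun hr x]
        split_ifs with h
        · exact mul_le_mul (Real.exp_le_exp.mpr (hC _ (consT_zero h))) (hgb _) (g _).2
            (Real.exp_nonneg _)
        · positivity)
  have k2 := congrArg ENNReal.ofReal key
  rw [ENNReal.ofReal_mul (Real.exp_nonneg _),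
    ofReal_integral_eq_lintegral_ofReal hin2 (ae_of_all _ hr0),
    ofReal_integral_eq_lintegral_ofReal hin1 (ae_of_all _ hG0)] at k2
  convert k2 using 1
  · refine lintegral_congr fun x => ?_
    rw [congrFun hr x]
    split_ifs
    · rw [ENNReal.ofReal_mul (Real.exp_nonneg _), ENNReal.ofReal_coe_nnreal]
    · simp
  · congr 1
    refine lintegral_congr fun x => ?_
    simp only [G]
    split_ifs
    · rw [ENNReal.ofReal_coe_nnreal]
    · simp

theorem dual {φ : MarkovShift A → ℝ} (hφ : Continuous φ)
    (hb : ∀ a, ∃ C, ∀ x : MarkovShift A, x.1 0 = a → φ x ≤ C)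
    {p : ℝ} {ν : Measure (MarkovShift A)} [IsProbabilityMeasure ν]
    (hd : ∀ g : MarkovShift A → ℝ, Continuous g → BoundedFun g →
      ∫ x, ruelle φ g x ∂ν = Real.exp p * ∫ x, g x ∂ν)
    (u : MarkovShift A → ℝ≥0∞) (hu : Measurable u) :
    ∫⁻ x, Lp φ u x ∂ν = ENNReal.ofReal (Real.exp p) * ∫⁻ x, u x ∂ν := by
  have hm : Measurable fun y => ENNReal.ofReal (Real.exp (φ y)) * u y :=
    (ENNReal.measurable_ofReal.comp (Real.measurable_exp.comp hφ.measurable)).mul hu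
  have h1 : ∀ x, u x = ∑' a : ℕ, if x.1 0 = a then u x else 0 := by
    intro x
    rw [tsum_eq_single (x.1 0)]
    · simp
    · intro b hb'; simp [hb'.symm]
  simp only [Lp, T]
  rw [lintegral_tsum, lintegral_congr h1, lintegral_tsum, ← ENNReal.tsum_mul_left]
  · exact tsum_congr fun a => branch_dual hφ hb hd a u hu
  · intro a
    exact (Measurable.ite ((continuous_coord 0).measurable (measurableSet_singleton a)) hu
      measurable_const).aemeasurable
  · intro a
    exact (Measurable.ite (measurableSet_adm a) (hm.comp (continuous_consT a).measurable)
      measurable_const).aemeasurable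

theorem dual_iter {φ : MarkovShift A → ℝ} (hφ : Continuous φ)
    (hb : ∀ a, ∃ C, ∀ x : MarkovShift A, x.1 0 = a → φ x ≤ C)
    {p : ℝ} {ν : Measure (MarkovShift A)} [IsProbabilityMeasure ν]
    (hd : ∀ g : MarkovShift A → ℝ, Continuous g → BoundedFun g →
      ∫ x, ruelle φ g x ∂ν = Real.exp p * ∫ x, g x ∂ν) (n : ℕ) :
    ∀ (u : MarkovShift A → ℝ≥0∞), Measurable u →
    ∫⁻ x, (Lp φ)^[n] u x ∂ν = ENNReal.ofReal (Real.exp p) ^ n * ∫⁻ x, u x ∂ν := by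
  induction n with
  | zero => intro u _; simp
  | succ n ih =>
    intro u hu
    rw [Function.iterate_succ_apply, ih _ (measurable_Lp hφ hu), dual hφ hb hd u hu]
    ring

theorem full_support (hmix : TopologicallyMixing A) {φ : MarkovShift A → ℝ} (hφ : Continuous φ)
    (hb : ∀ a, ∃ C, ∀ x : MarkovShift A, x.1 0 = a → φ x ≤ C)
    {p : ℝ} {ν : Measure (MarkovShift A)} [IsProbabilityMeasure ν]
    (hd : ∀ g : MarkovShift A → ℝ, Continuous g → BoundedFun g →
      ∫ x, ruelle φ g x ∂ν = Real.exp p * ∫ x, g x ∂ν)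
    {U : Set (MarkovShift A)} (hU : IsOpen U) (hne : U.Nonempty) : ν U ≠ 0 := by
  intro h0
  obtain ⟨z, hz⟩ := hne
  obtain ⟨m, hm⟩ := exists_cylOf_subset hU hz
  have hC : ν (cylOf z m) = 0 := measure_mono_null hm h0
  have hCm : MeasurableSet (cylOf z m) := (isOpen_cylOf z m).measurableSet
  have hum : Measurable ((cylOf z m).indicator (fun _ => (1 : ℝ≥0∞))) :=
    measurable_const.indicator hCm
  have key : ∀ n, ∀ᵐ x ∂ν, (Lp φ)^[n] ((cylOf z m).indicator (fun _ => (1 : ℝ≥0∞))) x = 0 := by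
    intro n
    have := dual_iter hφ hb hd n _ hum
    rw [lintegral_indicator hCm] at this
    simp only [lintegral_const, Measure.restrict_apply MeasurableSet.univ, Set.univ_inter, hC,
      mul_zero] at this
    exact (lintegral_eq_zero_iff (measurable_Lp_iter hφ n hum)).mp this
  obtain ⟨x, hx⟩ := (ae_all_iff.mpr key).exists
  obtain ⟨n, y, hy, rfl⟩ := exists_reach hmix z x m
  have := Lp_iter_pos φ n ((cylOf z m).indicator (fun _ => (1 : ℝ≥0∞))) y (by simp [hy])
  exact this.ne' (hx n)

theorem Lp_of_ruelle {φ h : MarkovShift A → ℝ} {p : ℝ} (hpos : ∀ x, 0 < h x)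
    (he : ∀ x, ruelle φ h x = Real.exp p * h x) :
    Lp φ (fun x => ENNReal.ofReal (h x)) =
      fun x => ENNReal.ofReal (Real.exp p) * ENNReal.ofReal (h x) := by
  funext x
  rw [Lp, T_eq, ← ENNReal.ofReal_mul (Real.exp_nonneg _), ← he x, ruelle,
    ENNReal.ofReal_tsum_of_nonneg]
  · exact tsum_congr fun y => (ENNReal.ofReal_mul (Real.exp_nonneg _)).symm
  · intro y; exact mul_nonneg (Real.exp_nonneg _) (hpos _).le
  · by_contra hs
    have := he x
    rw [ruelle, tsum_eq_zero_of_not_summable hs] at this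
    exact (mul_pos (Real.exp_pos p) (hpos x)).ne this

/-- Infimum of `H` over cylinders of length `N`. -/
noncomputable def lowr (H : MarkovShift A → ℝ≥0∞) (N : ℕ) (x : MarkovShift A) : ℝ≥0∞ :=
  ⨅ y ∈ cylOf x N, H y

theorem lowr_congr (H : MarkovShift A → ℝ≥0∞) {N : ℕ} {x y : MarkovShift A}
    (h : ∀ i < N, x.1 i = y.1 i) : lowr H N x = lowr H N y := by
  have : cylOf x N = cylOf y N := by
    ext z
    exact ⟨fun hz i hi => (hz i hi).trans (h i hi), fun hz i hi => (hz i hi).trans (h i hi).symm⟩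
  rw [lowr, lowr, this]

theorem measurable_lowr (H : MarkovShift A → ℝ≥0∞) (N : ℕ) : Measurable (lowr H N) := by
  have : IsLocallyConstant (lowr H N) := by
    rw [IsLocallyConstant.iff_exists_open]
    intro x
    exact ⟨cylOf x N, isOpen_cylOf x N, fun _ _ => rfl, fun y hy => lowr_congr H hy⟩
  exact this.continuous.measurable

theorem lowr_le (H : MarkovShift A → ℝ≥0∞) (N : ℕ) (x : MarkovShift A) : lowr H N x ≤ H x :=
  iInf₂_le x fun _ _ => rfl

theorem lowr_mono (H : MarkovShift A → ℝ≥0∞) : Monotone (lowr H) := by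
  intro N M hNM x
  exact biInf_mono fun y hy i hi => hy i (hi.trans_le hNM)

theorem iSup_lowr {H : MarkovShift A → ℝ≥0∞} (hH : Continuous H) (x : MarkovShift A) :
    ⨆ N, lowr H (N + 1) x = H x := by
  refine le_antisymm (iSup_le fun N => lowr_le H _ x) (le_of_forall_lt fun c hc => ?_)
  obtain ⟨d, hcd, hd⟩ := exists_between hc
  obtain ⟨m, hm⟩ := exists_cylOf_subset ((isOpen_Ioi (a := d)).preimage hH) (x := x) hd
  refine hcd.trans_le (le_trans ?_ (le_iSup _ m))
  refine le_trans ?_ (lowr_mono H (Nat.le_succ m) x)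
  exact le_iInf₂ fun y hy => (hm hy).le

theorem main_bound (hmix : TopologicallyMixing A) {φ : MarkovShift A → ℝ} (hφ : Continuous φ)
    (hb : ∀ a, ∃ C, ∀ x : MarkovShift A, x.1 0 = a → φ x ≤ C)
    {p : ℝ} {h : MarkovShift A → ℝ} {ν : Measure (MarkovShift A)} (hR : IsRPF φ p h ν)
    {k : ℕ} (hk : 1 ≤ k) {W : ℝ}
    (hW : ∀ n, 1 ≤ n → ∀ x y : MarkovShift A, (∀ i < n + k, x.1 i = y.1 i) →
      birkhoff φ n x ≤ W + birkhoff φ n y)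
    {x y : MarkovShift A} (hxy : ∀ i < k, x.1 i = y.1 i) :
    h x ≤ Real.exp W * h y := by
  obtain ⟨hc, hpos, he, hprob, hd, hone⟩ := hR
  set H : MarkovShift A → ℝ≥0∞ := fun x => ENNReal.ofReal (h x) with hHdef
  have hHc : Continuous H := ENNReal.continuous_ofReal.comp hc
  set lam := ENNReal.ofReal (Real.exp p) with hlam
  have hl0 : lam ≠ 0 := by simp [hlam, Real.exp_pos]
  have hlt : lam ≠ ∞ := ENNReal.ofReal_ne_top
  have hLH : Lp φ H = fun x => lam * H x := Lp_of_ruelle hpos he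
  have hHfin : ∫⁻ x, H x ∂ν ≠ ∞ := by
    have hi : Integrable h ν := by
      by_contra hn
      rw [integral_undef hn] at hone
      exact zero_ne_one hone
    have := hi.lintegral_lt_top
    exact this.ne
  let v : ℕ → MarkovShift A → ℝ≥0∞ :=
    fun N x => (lam ^ (N + 1))⁻¹ * (Lp φ)^[N + 1] (lowr H (N + 1)) x
  have hvm : ∀ N, Measurable (v N) := fun N =>
    (measurable_Lp_iter hφ _ (measurable_lowr H _)).const_mul _
  have hln0 : ∀ n, lam ^ n ≠ 0 := fun n => pow_ne_zero n hl0
  have hlnt : ∀ n, lam ^ n ≠ ∞ := fun n => ENNReal.pow_ne_top hlt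
  have hvH : ∀ N x, v N x ≤ H x := by
    intro N x
    have h1 := Lp_iter_mono φ (N + 1) (lowr_le H (N + 1)) x
    rw [Lp_iter_eigen φ lam H hLH] at h1
    calc v N x ≤ (lam ^ (N + 1))⁻¹ * (lam ^ (N + 1) * H x) := mul_le_mul_right h1 _
      _ = H x := by rw [← mul_assoc, ENNReal.inv_mul_cancel (hln0 _) (hlnt _), one_mul]
  have hvi : ∀ N, ∫⁻ x, v N x ∂ν = ∫⁻ x, lowr H (N + 1) x ∂ν := by
    intro N
    simp only [v]
    rw [lintegral_const_mul _ (measurable_Lp_iter hφ _ (measurable_lowr H _)),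
      dual_iter hφ hb hd _ _ (measurable_lowr H _), ← mul_assoc,
      ENNReal.inv_mul_cancel (hln0 _) (hlnt _), one_mul]
  have hle : ∫⁻ x, H x ∂ν ≤ ∫⁻ x, ⨆ N, v N x ∂ν := by
    calc ∫⁻ x, H x ∂ν = ∫⁻ x, ⨆ N, lowr H (N + 1) x ∂ν :=
          lintegral_congr fun x => (iSup_lowr hHc x).symm
      _ = ⨆ N, ∫⁻ x, lowr H (N + 1) x ∂ν :=
          lintegral_iSup (fun N => measurable_lowr H _)
            (fun N M hNM => lowr_mono H (Nat.succ_le_succ hNM))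
      _ ≤ _ := iSup_le fun N => by
          rw [← hvi]; exact lintegral_mono fun x => le_iSup (fun N => v N x) N
  have hsup_le : ∀ x, ⨆ N, v N x ≤ H x := fun x => iSup_le fun N => hvH N x
  have hae : (fun x => ⨆ N, v N x) =ᵐ[ν] H :=
    ae_eq_of_ae_le_of_lintegral_le (Eventually.of_forall hsup_le)
      (ne_top_of_le_ne_top hHfin (lintegral_mono hsup_le)) hHc.measurable.aemeasurable hle
  have hdist : ∀ x y : MarkovShift A, (∀ i < k, x.1 i = y.1 i) →
      ⨆ N, v N x ≤ ENNReal.ofReal (Real.exp W) * ⨆ N, v N y := by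
    intro x y hxy
    rw [ENNReal.mul_iSup]
    refine iSup_mono fun N => ?_
    simp only [v]
    rw [mul_left_comm]
    refine mul_le_mul_right ?_ _
    have := congrFun (Lp_iter_const_mul φ (ENNReal.ofReal (Real.exp W)) (N + 1)
      (lowr H (N + 1))) y
    rw [← this, Lp_iter_eq, Lp_iter_eq]
    refine T_iter_compare hk (N + 1) _ _ hxy ?_
    intro z z' _ _ hz
    rw [lowr_congr H (x := z) (y := z') fun i hi => hz i (by omega), ← mul_assoc]
    refine mul_le_mul_left ?_ _
    rw [← ENNReal.ofReal_mul (Real.exp_nonneg _), ← Real.exp_add]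
    refine ENNReal.ofReal_le_ofReal (Real.exp_le_exp.mpr ?_)
    have := hW (N + 1) (by omega) z z' hz
    linarith
  have hmeet : ∀ U : Set (MarkovShift A), IsOpen U → U.Nonempty →
      ∃ z ∈ U, ⨆ N, v N z = H z := by
    intro U hU hne
    by_contra! hcon
    have h0 : ν U = 0 := measure_mono_null (fun z hz => hcon z hz) (ae_iff.mp hae)
    exact full_support hmix hφ hb hd hU hne h0
  by_contra! hlt'
  obtain ⟨t, ht1, ht2⟩ := exists_between hlt'
  obtain ⟨x', ⟨hx1, hx2⟩, hx3⟩ := hmeet (cylOf x k ∩ h ⁻¹' Set.Ioi t)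
    ((isOpen_cylOf x k).inter (isOpen_Ioi.preimage hc)) ⟨x, fun _ _ => rfl, ht2⟩
  obtain ⟨y', ⟨hy1, hy2⟩, hy3⟩ := hmeet (cylOf y k ∩ (fun z => Real.exp W * h z) ⁻¹' Set.Iio t)
    ((isOpen_cylOf y k).inter (isOpen_Iio.preimage (continuous_const.mul hc)))
    ⟨y, fun _ _ => rfl, ht1⟩
  have := hdist x' y' fun i hi => by rw [hx1 i hi, hy1 i hi, hxy i hi]
  rw [hx3, hy3, hHdef] at this
  simp only at this
  rw [← ENNReal.ofReal_mul (Real.exp_nonneg _),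
    ENNReal.ofReal_le_ofReal_iff (mul_nonneg (Real.exp_nonneg _) (hpos _).le)] at this
  have h1 : t < h x' := hx2
  have h2 : Real.exp W * h y' < t := hy2
  linarith

theorem walters_le {f : MarkovShift A → ℝ} (hWalters : SatisfiesWalters f) {k : ℕ} (hk : 1 ≤ k)
    {n : ℕ} (hn : 1 ≤ n) {x y : MarkovShift A} (h : ∀ i < n + k, x.1 i = y.1 i) :
    |birkhoff f n x - birkhoff f n y| ≤ waltersSup f k :=
  le_csSup (hWalters.1 k hk) ⟨n, hn, x, y, h, rfl⟩

theorem birkhoff_one (f : MarkovShift A → ℝ) (x : MarkovShift A) : birkhoff f 1 x = f x := by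
  simp [birkhoff]

theorem continuous_of_walters {f : MarkovShift A → ℝ} (hWalters : SatisfiesWalters f) :
    Continuous f := by
  rw [continuous_iff_continuousAt]
  intro x
  rw [ContinuousAt, Metric.tendsto_nhds]
  intro ε hε
  obtain ⟨k, hk1, hk2⟩ := ((hWalters.2.eventually (gt_mem_nhds hε)).and
    (eventually_ge_atTop 1)).exists
  filter_upwards [(isOpen_cylOf x (1 + k)).mem_nhds (fun _ _ => rfl)] with y hy
  have := walters_le hWalters hk2 le_rfl (x := y) (y := x) hy
  rw [birkhoff_one, birkhoff_one] at this
  rw [Real.dist_eq]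
  exact this.trans_lt hk1

theorem bdd_of_var1 {f : MarkovShift A → ℝ} (hV : Var1Finite f) (a : ℕ) :
    ∃ C, ∀ x : MarkovShift A, x.1 0 = a → f x ≤ C := by
  obtain ⟨B, hB⟩ := hV
  by_cases hne : ∃ z : MarkovShift A, z.1 0 = a
  · obtain ⟨z, hz⟩ := hne
    refine ⟨f z + B, fun x hx => ?_⟩
    have := hB ⟨x, z, fun i hi => by
      obtain rfl : i = 0 := by omega
      rw [hx, hz], rfl⟩
    rw [birkhoff_one, birkhoff_one] at this
    linarith [le_abs_self (f x - f z)]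
  · exact ⟨0, fun x hx => absurd ⟨x, hx⟩ hne⟩

end aux

/-- `Var_k((1/β) log h_β)` is bounded by a constant `M_k` independent of `β`,
with `M_k → 0` as `k → ∞`. -/
theorem variation_of_log_eigenfunction
    (A : ℕ → ℕ → Bool)
    (hmix : TopologicallyMixing A)
    (hbip : FinitelyPrimitive A)
    (f : MarkovShift A → ℝ)
    (hWalters : SatisfiesWalters f)
    (hVar1 : Var1Finite f)
    (P : ℝ → ℝ)
    (hPfin : HasGurevichPressure f (P 1))
    (h : ℝ → MarkovShift A → ℝ)
    (ν : ℝ → Measure (MarkovShift A))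
    (hRPF : ∀ β : ℝ, 0 < β → IsRPF (fun x => β * f x) (P β) (h β) (ν β)) :
    ∃ M : ℕ → ℝ, Tendsto M atTop (𝓝 0) ∧
      ∀ k : ℕ, 1 ≤ k → ∀ β : ℝ, 0 < β → ∀ x y : MarkovShift A,
        (∀ i < k, x.1 i = y.1 i) →
          |(1 / β) * Real.log (h β x) - (1 / β) * Real.log (h β y)| ≤ M k := by
  refine ⟨waltersSup f, hWalters.2, ?_⟩
  intro k hk β hβ x y hxy
  have hfc := continuous_of_walters hWalters
  have hb : ∀ a, ∃ C, ∀ x : MarkovShift A, x.1 0 = a → β * f x ≤ C := by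
    intro a
    obtain ⟨C, hC⟩ := bdd_of_var1 hVar1 a
    exact ⟨β * C, fun x hx => mul_le_mul_of_nonneg_left (hC x hx) hβ.le⟩
  have hbk : ∀ n (x : MarkovShift A), birkhoff (fun x => β * f x) n x = β * birkhoff f n x := by
    intro n x
    simp [birkhoff, Finset.mul_sum]
  have hW : ∀ n, 1 ≤ n → ∀ x y : MarkovShift A, (∀ i < n + k, x.1 i = y.1 i) →
      birkhoff (fun x => β * f x) n x ≤
        β * waltersSup f k + birkhoff (fun x => β * f x) n y := by
    intro n hn x y hxy
    rw [hbk, hbk, ← mul_add]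
    refine mul_le_mul_of_nonneg_left ?_ hβ.le
    have := walters_le hWalters hk hn hxy
    linarith [le_abs_self (birkhoff f n x - birkhoff f n y)]
  have key : ∀ x y : MarkovShift A, (∀ i < k, x.1 i = y.1 i) →
      Real.log (h β x) - Real.log (h β y) ≤ β * waltersSup f k := by
    intro x y hxy
    have h1 := main_bound hmix (continuous_const.mul hfc) hb (hRPF β hβ) hk hW hxy
    have hpos := (hRPF β hβ).2.1
    have h2 := Real.log_le_log (hpos x) h1
    rw [Real.log_mul (Real.exp_pos _).ne' (hpos y).ne', Real.log_exp] at h2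
    linarith
  rw [← mul_sub, abs_mul, abs_of_pos (one_div_pos.mpr hβ), one_div, inv_mul_le_iff₀ hβ, abs_le]
  have h1 := key x y hxy
  have h2 := key y x fun i hi => (hxy i hi).symm
  constructor <;> linarith

end MarkovShift
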